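/- Let γ > 0, 1 < α < 2, p > 1, a > 0, b > 0. Assume that one of the following four conditions holds: (a) α + γ > 2 and p(1−γ) ≤ 1; (b) α + γ ≤ 2, together with the requirement w'(0) = 0 below, and p(1−γ) ≤ 1; (c) α + γ = 2, together with the requirement w'(0) > 0 below, and p(1−γ) ≤ 1; (d) α + γ < 2, together with the requirement w'(0) > 0 below, and p < 1 + γ/(α−1). Then there exists no w ∈ C¹([0,∞)) with w ≢ 0 such that the function t ↦ ₀I_t^{2−α}(w(s) − w'(0)s − w(0)) is in AC²([0,T]) for every T > 0 and for almost every t ≥ 0 one has (₀D_t^α w)(t) + a·w(t) ≥ b·(₀I_t^γ (|w|^p))(t). In other words, any such w defined on a maximal interval [0,T) must have T < +∞. -/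

import Mathlib

/-!
The proof tests the inequality on `[0,T]` against the weight `(T-t)^n` with `n` large and lets
`T → ∞`.  Fubini's theorem and the Beta integral (`fracInt_weight`) turn the fractional integral
`I^σ` into multiplication of the weight by a constant times `(T-t)^σ`.  Ordinary integration is the
case `σ = 1`, so the same lemma moves the two derivatives of the Caputo operator onto the weight
(`caputo_weight`); no boundary terms appear at `0` since the kernel and its derivative vanish there
(`deriv_capKernel_zero`).

With `v = |w| (1 - s/T)^q`, `V = ∫₀ᵀ v` and `X = ∫₀ᵀ v^p`, this gives for `T ≥ 1`
(`normalized_ineq`)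
  `B T^γ X + C₁ w'(0) T^{2-α} + C₀ w(0) T^{1-α} ≤ D V`,
while Young's inequality bounds `V` by `δ X + T δ^{-1/(p-1)}` for every `δ > 0`.

* In case (d), taking `δ = (B/D) T^γ` leaves `w'(0) T^{2-α} ≲ T^{1-γ/(p-1)}` up to lower order,
  which is impossible (`false_of_growth`).
* In cases (a)–(c), dividing by `T^γ` makes the initial-data terms nonnegative or negligible, and
  `p(1-γ) ≤ 1` makes `T^{-γ} V ≤ η X + η^{-1/(p-1)}`.  Hence `w ∈ L^p(0,∞)`.  Applying the last
  bound only to the tail `[R,T]`, and letting `T`, then `R`, then `η` tend to infinity, yields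
  `∫ |w|^p = 0` (`false_of_integrable`); this covers the critical exponent as well.
-/

open MeasureTheory Filter

/-- Riemann–Liouville fractional integral of order `σ` based at `0`:
`(₀I_t^σ f)(t) = (1/Γ(σ)) ∫₀ᵗ (t−s)^{σ−1} f(s) ds`. -/
noncomputable def rlInt (σ : ℝ) (f : ℝ → ℝ) (t : ℝ) : ℝ :=
  (1 / Real.Gamma σ) * ∫ s in (0:ℝ)..t, (t - s) ^ (σ - 1) * f s

/-- The function whose second derivative is the (left) Caputo derivative of order `α ∈ (1,2]`:
for `α < 2` it is `₀I_t^{2−α}(w(s) − w'(0)·s − w(0))`, and for `α = 2` it is `w` itself. -/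
noncomputable def capKernel (α : ℝ) (w : ℝ → ℝ) : ℝ → ℝ :=
  if α = 2 then w else rlInt (2 - α) (fun s => w s - deriv w 0 * s - w 0)

/-- Left Caputo fractional derivative of order `α ∈ (1,2]`:
`(₀D_t^α w)(t) = (d²/dt²)[ ₀I_t^{2−α}(w(s) − w'(0)s − w(0)) ](t)` (second derivative of `w` when `α = 2`). -/
noncomputable def caputoD (α : ℝ) (w : ℝ → ℝ) : ℝ → ℝ :=
  deriv (deriv (capKernel α w))

/-- `g ∈ AC²([0,T])`: `g` is differentiable on `[0,T]`, its second derivative is integrable,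
and `g'` is the integral of `g''` (i.e. `g'` is absolutely continuous). -/
def AC2On (g : ℝ → ℝ) (T : ℝ) : Prop :=
  (∀ t ∈ Set.Icc (0:ℝ) T, DifferentiableAt ℝ g t) ∧
  IntervalIntegrable (deriv (deriv g)) volume 0 T ∧
  ∀ t ∈ Set.Icc (0:ℝ) T, deriv g t = deriv g 0 + ∫ s in (0:ℝ)..t, deriv (deriv g) s


/-! ### The Beta integral and fractional integration by parts -/

/-- The Beta integral `∫₀¹ x^{u-1} (1-x)^{v-1} dx` over the reals. -/
noncomputable def betaConst (u v : ℝ) : ℝ :=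
  ∫ x in (0:ℝ)..1, x ^ (u - 1) * (1 - x) ^ (v - 1)

theorem intervalIntegrable_rpow_mul_sub_rpow {u v T : ℝ} (hu : 0 < u) (hv : 1 ≤ v) :
    IntervalIntegrable (fun x : ℝ => x ^ (u - 1) * (T - x) ^ (v - 1)) volume 0 T := by
  apply (intervalIntegral.intervalIntegrable_rpow' (by linarith)).mul_continuousOn
  apply Continuous.continuousOn
  exact (continuous_const.sub continuous_id).rpow_const (fun _ => Or.inr (by linarith))

theorem betaConst_pos {u v : ℝ} (hu : 0 < u) (hv : 1 ≤ v) : 0 < betaConst u v := by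
  apply intervalIntegral.intervalIntegral_pos_of_pos_on
    (intervalIntegrable_rpow_mul_sub_rpow hu hv) _ one_pos
  intro x hx
  have h1 : 0 < x := hx.1
  have h2 : 0 < 1 - x := by linarith [hx.2]
  positivity

theorem integral_rpow_mul_sub_rpow {u v T : ℝ} (hT : 0 < T) :
    ∫ x in (0:ℝ)..T, x ^ (u - 1) * (T - x) ^ (v - 1) = betaConst u v * T ^ (u + v - 1) := by
  have h := intervalIntegral.integral_comp_mul_left (a := 0) (b := 1)
    (fun x : ℝ => x ^ (u - 1) * (T - x) ^ (v - 1)) hT.ne'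
  simp only [mul_zero, mul_one, smul_eq_mul] at h
  have h2 : ∫ x in (0:ℝ)..1, (T * x) ^ (u - 1) * (T - T * x) ^ (v - 1)
      = T ^ (u + v - 2) * betaConst u v := by
    rw [betaConst, ← intervalIntegral.integral_const_mul]
    apply intervalIntegral.integral_congr
    intro x hx
    rw [Set.uIcc_of_le zero_le_one] at hx
    have h3 : T - T * x = T * (1 - x) := by ring
    simp only
    rw [h3, Real.mul_rpow hT.le hx.1, Real.mul_rpow hT.le (by linarith [hx.2]),
      show u + v - 2 = (u - 1) + (v - 1) by ring, Real.rpow_add hT]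
    ring
  rw [h2] at h
  have h4 : T ^ (u + v - 1) = T * T ^ (u + v - 2) := by
    rw [show u + v - 1 = 1 + (u + v - 2) by ring, Real.rpow_add hT, Real.rpow_one]
  rw [h4]
  field_simp at h
  linarith

/-- Fractional integration by parts against the weight `(T-t)^m`: it transposes the
left-sided fractional integral into a right-sided one, and the latter maps `(T-t)^m` to a
multiple of `(T-t)^{σ+m}`. -/
theorem fracInt_weight {σ m T : ℝ} (hσ : 0 < σ) (hm : 0 ≤ m) (hT : 0 < T) {f : ℝ → ℝ}
    (hf : IntervalIntegrable f volume 0 T) :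
    IntervalIntegrable
      (fun t => (∫ s in (0:ℝ)..t, (t - s) ^ (σ - 1) * f s) * (T - t) ^ m) volume 0 T ∧
    ∫ t in (0:ℝ)..T, (∫ s in (0:ℝ)..t, (t - s) ^ (σ - 1) * f s) * (T - t) ^ m
      = betaConst σ (m + 1) * ∫ s in (0:ℝ)..T, f s * (T - s) ^ (σ + m) := by
  set F : ℝ → ℝ := (Set.Ioc 0 T).indicator f with hF
  set K : ℝ → ℝ := (Set.Ioc 0 T).indicator (fun x => x ^ (σ - 1)) with hK
  set W : ℝ → ℝ := (Set.Ioc 0 T).indicator (fun x => (T - x) ^ m) with hW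
  have hFi : Integrable F := by
    rw [hF, integrable_indicator_iff measurableSet_Ioc]
    exact (intervalIntegrable_iff_integrableOn_Ioc_of_le hT.le).1 hf
  have hKi : Integrable K := by
    rw [hK, integrable_indicator_iff measurableSet_Ioc]
    exact (intervalIntegrable_iff_integrableOn_Ioc_of_le hT.le).1
      (intervalIntegral.intervalIntegrable_rpow' (by linarith))
  have hWm : Measurable W := by
    apply Measurable.indicator _ measurableSet_Ioc
    fun_prop
  have hWb : ∀ x, ‖W x‖ ≤ T ^ m := by
    intro x
    by_cases hx : x ∈ Set.Ioc 0 T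
    · rw [hW, Set.indicator_of_mem hx, Real.norm_of_nonneg
        (Real.rpow_nonneg (by linarith [hx.2]) _)]
      exact Real.rpow_le_rpow (by linarith [hx.2]) (by linarith [hx.1]) hm
    · rw [hW, Set.indicator_of_notMem hx, norm_zero]
      positivity
  have hG : Integrable (Function.uncurry fun t s => W t * (F s * K (t - s)))
      (volume.prod volume) := by
    have h1 := hFi.convolution_integrand (ContinuousLinearMap.mul ℝ ℝ) hKi
    exact h1.bdd_mul (c := T ^ m) ((hWm.comp measurable_fst).aestronglyMeasurable)
      (Eventually.of_forall fun x => hWb x.1)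
  have hinner1 : ∀ t, ∫ s, W t * (F s * K (t - s)) = (Set.Ioc 0 T).indicator
      (fun t => (∫ s in (0:ℝ)..t, (t - s) ^ (σ - 1) * f s) * (T - t) ^ m) t := by
    intro t
    by_cases ht : t ∈ Set.Ioc 0 T
    · rw [Set.indicator_of_mem ht, integral_const_mul, hW, Set.indicator_of_mem ht, mul_comm,
        intervalIntegral.integral_of_le ht.1.le, integral_Ioc_eq_integral_Ioo,
        ← integral_indicator measurableSet_Ioo]
      congr 2
      ext s
      by_cases hs : s ∈ Set.Ioo 0 t
      · rw [Set.indicator_of_mem hs, hF, hK,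
          Set.indicator_of_mem (show s ∈ Set.Ioc 0 T from ⟨hs.1, by linarith [hs.2, ht.2]⟩),
          Set.indicator_of_mem (show t - s ∈ Set.Ioc 0 T from
            ⟨by linarith [hs.2], by linarith [hs.1, ht.2]⟩), mul_comm]
      · rw [Set.indicator_of_notMem hs]
        by_cases hs0 : 0 < s
        · have : t - s ∉ Set.Ioc 0 T := fun h => hs ⟨hs0, by linarith [h.1]⟩
          rw [hK, Set.indicator_of_notMem this, mul_zero]
        · have : s ∉ Set.Ioc 0 T := fun h => hs0 h.1
          rw [hF, Set.indicator_of_notMem this, zero_mul]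
    · rw [Set.indicator_of_notMem ht, hW]
      simp [Set.indicator_of_notMem ht]
  have hinner2 : ∀ s, ∫ t, W t * (F s * K (t - s)) = (Set.Ioc 0 T).indicator
      (fun s => betaConst σ (m + 1) * (f s * (T - s) ^ (σ + m))) s := by
    intro s
    by_cases hs : s ∈ Set.Ioc 0 T
    · have h1 : ∀ t, W t * (F s * K (t - s))
          = f s * (Set.Ioc s T).indicator (fun t => (t - s) ^ (σ - 1) * (T - t) ^ m) t := by
        intro t
        rw [hF, Set.indicator_of_mem hs]
        by_cases ht : t ∈ Set.Ioc s T
        · rw [Set.indicator_of_mem ht, hK, hW,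
            Set.indicator_of_mem (show t ∈ Set.Ioc 0 T from ⟨by linarith [hs.1, ht.1], ht.2⟩),
            Set.indicator_of_mem (show t - s ∈ Set.Ioc 0 T from
              ⟨by linarith [ht.1], by linarith [hs.1, ht.2]⟩)]
          ring
        · rw [Set.indicator_of_notMem ht, mul_zero]
          by_cases ht0 : s < t
          · have : t ∉ Set.Ioc 0 T := fun h => ht ⟨ht0, h.2⟩
            rw [hW, Set.indicator_of_notMem this, zero_mul]
          · have : t - s ∉ Set.Ioc 0 T := fun h => ht0 (by linarith [h.1])
            rw [hK, Set.indicator_of_notMem this, mul_zero, mul_zero]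
      rw [Set.indicator_of_mem hs]
      simp_rw [h1]
      rw [integral_const_mul, integral_indicator measurableSet_Ioc,
        ← intervalIntegral.integral_of_le hs.2]
      have h2 := intervalIntegral.integral_comp_add_right (a := 0) (b := T - s)
        (fun t : ℝ => (t - s) ^ (σ - 1) * (T - t) ^ m) s
      rw [zero_add, sub_add_cancel] at h2
      rw [← h2]
      rcases hs.2.eq_or_lt with h3 | h3
      · subst h3
        simp [Real.zero_rpow (show σ + m ≠ 0 by linarith)]
      · have h4 := integral_rpow_mul_sub_rpow (u := σ) (v := m + 1) (sub_pos.2 h3)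
        simp only [add_sub_cancel_right] at h4 ⊢
        rw [show σ + m = σ + (m + 1) - 1 by ring, mul_left_comm, ← h4]
        congr 1
        apply intervalIntegral.integral_congr
        intro x _
        simp only
        rw [show T - (x + s) = T - s - x by ring]
    · rw [Set.indicator_of_notMem hs, hF]
      simp [Set.indicator_of_notMem hs]
  constructor
  · rw [intervalIntegrable_iff_integrableOn_Ioc_of_le hT.le,
      ← integrable_indicator_iff measurableSet_Ioc]
    exact hG.integral_prod_left.congr (Eventually.of_forall hinner1)
  · have h := integral_integral_swap hG
    simp_rw [hinner1, hinner2] at h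
    rw [integral_indicator measurableSet_Ioc, integral_indicator measurableSet_Ioc,
      ← intervalIntegral.integral_of_le hT.le, ← intervalIntegral.integral_of_le hT.le,
      intervalIntegral.integral_const_mul] at h
    exact h

/-! ### The inequality tested against a power weight -/

/-- The derivative can be computed from the right, and on the right of `0` the kernel is
`O(t^{3-α})` because `w(s) - w'(0)s - w(0) = O(s)`. -/
theorem deriv_capKernel_zero {α : ℝ} {w : ℝ → ℝ} (hα2 : α < 2)
    (hw : ContDiff ℝ 1 w) (hd : DifferentiableAt ℝ (capKernel α w) 0) :
    deriv (capKernel α w) 0 = 0 := by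
  have hk : capKernel α w = rlInt (2 - α) (fun s => w s - deriv w 0 * s - w 0) := by
    rw [capKernel, if_neg hα2.ne]
  have hg0 : capKernel α w 0 = 0 := by simp [hk, rlInt]
  set h : ℝ → ℝ := fun s => w s - deriv w 0 * s - w 0 with hh
  have hhd : DifferentiableAt ℝ h 0 := by
    have : DifferentiableAt ℝ w 0 := (hw.differentiable one_ne_zero) 0
    fun_prop
  have hO := hhd.hasDerivAt.isBigO_sub
  have hh0 : h 0 = 0 := by simp [hh]
  simp only [hh0, sub_zero] at hO
  obtain ⟨M, hM⟩ := hO.bound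
  obtain ⟨ε, hε, hball⟩ := Metric.eventually_nhds_iff.1 hM
  have hbound : ∀ t, 0 < t → t < ε →
      ‖t⁻¹ * capKernel α w t‖ ≤ |1 / Real.Gamma (2 - α)| * M * (t ^ (2 - α) / (2 - α)) := by
    intro t ht htε
    have h1 : ‖∫ s in (0:ℝ)..t, (t - s) ^ (2 - α - 1) * h s‖
        ≤ ∫ s in (0:ℝ)..t, (t - s) ^ (2 - α - 1) * (M * t) := by
      apply intervalIntegral.norm_integral_le_of_norm_le ht.le
      · filter_upwards with s hs
        have h2 := hball (y := s) (by simpa [abs_of_pos hs.1] using lt_of_le_of_lt hs.2 htε)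
        have h3 : 0 ≤ (t - s) ^ (2 - α - 1) := Real.rpow_nonneg (by linarith [hs.2]) _
        rw [norm_mul, Real.norm_of_nonneg h3]
        apply mul_le_mul_of_nonneg_left _ h3
        rw [Real.norm_of_nonneg hs.1.le] at h2
        have hM0 : 0 ≤ M := by
          by_contra hneg
          have : M * s < 0 := mul_neg_of_neg_of_pos (not_le.1 hneg) hs.1
          linarith [norm_nonneg (h s)]
        exact h2.trans (mul_le_mul_of_nonneg_left hs.2 hM0)
      · apply IntervalIntegrable.mul_const
        have := (intervalIntegral.intervalIntegrable_rpow' (a := t) (b := 0)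
          (r := 2 - α - 1) (by linarith)).comp_sub_left t
        simpa using this
    have h4 : ∫ s in (0:ℝ)..t, (t - s) ^ (2 - α - 1) * (M * t)
        = t ^ (2 - α) / (2 - α) * (M * t) := by
      rw [intervalIntegral.integral_mul_const,
        intervalIntegral.integral_comp_sub_left (fun x => x ^ (2 - α - 1)) t,
        integral_rpow (Or.inl (by linarith))]
      simp [Real.zero_rpow (show 2 - α ≠ 0 by linarith)]
    rw [h4] at h1
    rw [hk, rlInt, norm_mul, norm_mul, Real.norm_eq_abs (1 / _), norm_inv,
      Real.norm_of_nonneg ht.le]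
    calc t⁻¹ * (|1 / Real.Gamma (2 - α)| * ‖∫ s in (0:ℝ)..t, (t - s) ^ (2 - α - 1) * h s‖)
        ≤ t⁻¹ * (|1 / Real.Gamma (2 - α)| * (t ^ (2 - α) / (2 - α) * (M * t))) := by
          gcongr
      _ = _ := by field_simp
  have hlim : Tendsto (fun t : ℝ => t⁻¹ * capKernel α w t) (nhdsWithin 0 (Set.Ioi 0))
      (nhds 0) := by
    apply squeeze_zero_norm' (a := fun t : ℝ =>
      |1 / Real.Gamma (2 - α)| * M * (t ^ (2 - α) / (2 - α)))
    · filter_upwards [Ioo_mem_nhdsGT hε] with t ht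
      exact hbound t ht.1 ht.2
    · have : ContinuousAt (fun t : ℝ =>
          |1 / Real.Gamma (2 - α)| * M * (t ^ (2 - α) / (2 - α))) 0 := by
        have := Real.continuousAt_rpow_const 0 (2 - α) (Or.inr (by linarith))
        fun_prop
      have h5 := this.tendsto.mono_left (nhdsWithin_le_nhds (s := Set.Ioi 0))
      simpa [Real.zero_rpow (show 2 - α ≠ 0 by linarith)] using h5
  have hlim2 : Tendsto (fun t : ℝ => t⁻¹ * capKernel α w t) (nhdsWithin 0 (Set.Ioi 0))
      (nhds (deriv (capKernel α w) 0)) := by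
    have h6 := hd.hasDerivAt.tendsto_slope_zero_right
    simpa [hg0] using h6
  exact tendsto_nhds_unique hlim2 hlim

/-- Transposing the Caputo derivative onto the weight `(T-t)^n`.  Both boundary terms vanish:
at `T` because of the weight, at `0` because the kernel and its derivative vanish there. -/
theorem caputo_weight {α n : ℝ} {w : ℝ → ℝ} (hα2 : α < 2) (hn : 2 ≤ n)
    (hw : ContDiff ℝ 1 w) (hAC : ∀ T > (0:ℝ), AC2On (capKernel α w) T) :
    ∃ A > 0, ∀ T > 0,
      IntervalIntegrable (fun t => caputoD α w t * (T - t) ^ n) volume 0 T ∧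
      ∫ t in (0:ℝ)..T, caputoD α w t * (T - t) ^ n
        = A * ∫ s in (0:ℝ)..T, (w s - deriv w 0 * s - w 0) * (T - s) ^ (n - α) := by
  have hk : capKernel α w = rlInt (2 - α) (fun s => w s - deriv w 0 * s - w 0) := by
    rw [capKernel, if_neg hα2.ne]
  have hg0 : capKernel α w 0 = 0 := by simp [hk, rlInt]
  have hΓ : 0 < Real.Gamma (2 - α) := Real.Gamma_pos_of_pos (by linarith)
  have hb1 : 0 < betaConst 1 (n - 1 + 1) := betaConst_pos one_pos (by linarith)
  have hb2 : 0 < betaConst 1 (n - 2 + 1) := betaConst_pos one_pos (by linarith)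
  have hb3 : 0 < betaConst (2 - α) (n - 2 + 1) := betaConst_pos (by linarith) (by linarith)
  refine ⟨1 / Real.Gamma (2 - α) * betaConst (2 - α) (n - 2 + 1)
    / (betaConst 1 (n - 2 + 1) * betaConst 1 (n - 1 + 1)), by positivity, fun T hT => ?_⟩
  obtain ⟨hd, hg2i, hFTC⟩ := hAC T hT
  have hg'0 := deriv_capKernel_zero hα2 hw (hd 0 ⟨le_rfl, hT.le⟩)
  rw [hg'0] at hFTC
  simp only [zero_add] at hFTC
  set g := capKernel α w with hg
  have hcd : caputoD α w = deriv (deriv g) := rfl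
  have hg'c : ContinuousOn (deriv g) (Set.uIcc 0 T) := by
    have h1 := intervalIntegral.continuousOn_primitive_interval' hg2i Set.left_mem_uIcc
    refine h1.congr fun t ht => ?_
    rw [Set.uIcc_of_le hT.le] at ht
    exact hFTC t ht
  have hgFTC : ∀ t ∈ Set.Icc 0 T, g t = ∫ s in (0:ℝ)..t, deriv g s := by
    intro t ht
    have hsub : Set.uIcc 0 t ⊆ Set.uIcc 0 T := by
      rw [Set.uIcc_of_le ht.1, Set.uIcc_of_le hT.le]
      exact Set.Icc_subset_Icc_right ht.2
    rw [intervalIntegral.integral_eq_sub_of_hasDerivAt (f := g)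
      (fun x hx => (hd x (by simpa [Set.uIcc_of_le hT.le] using hsub hx)).hasDerivAt)
      ((hg'c.mono hsub).intervalIntegrable), hg0, sub_zero]
  have e1 := (fracInt_weight (σ := 1) (m := n - 1) one_pos (by linarith) hT hg2i).2
  have e2 := (fracInt_weight (σ := 1) (m := n - 2) one_pos (by linarith) hT
    hg'c.intervalIntegrable).2
  have e3 := (fracInt_weight (σ := 2 - α) (m := n - 2) (T := T)
    (f := fun s => w s - deriv w 0 * s - w 0) (by linarith) (by linarith) hT
    (by
      have := hw.continuous
      exact Continuous.intervalIntegrable (by fun_prop) _ _)).2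
  simp only [sub_self, Real.rpow_zero, one_mul] at e1 e2
  have f1 : ∫ t in (0:ℝ)..T, (∫ s in (0:ℝ)..t, deriv (deriv g) s) * (T - t) ^ (n - 1)
      = ∫ t in (0:ℝ)..T, deriv g t * (T - t) ^ (n - 1) := by
    apply intervalIntegral.integral_congr
    intro t ht
    rw [Set.uIcc_of_le hT.le] at ht
    simp only [hFTC t ht]
  have f2 : ∫ t in (0:ℝ)..T, (∫ s in (0:ℝ)..t, deriv g s) * (T - t) ^ (n - 2)
      = ∫ t in (0:ℝ)..T, g t * (T - t) ^ (n - 2) := by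
    apply intervalIntegral.integral_congr
    intro t ht
    rw [Set.uIcc_of_le hT.le] at ht
    simp only [hgFTC t ht]
  have f3 : ∫ t in (0:ℝ)..T, g t * (T - t) ^ (n - 2) = 1 / Real.Gamma (2 - α) *
      ∫ t in (0:ℝ)..T, (∫ s in (0:ℝ)..t,
        (t - s) ^ (2 - α - 1) * (w s - deriv w 0 * s - w 0)) * (T - t) ^ (n - 2) := by
    rw [← intervalIntegral.integral_const_mul]
    apply intervalIntegral.integral_congr
    intro t _
    simp only [hk, rlInt]
    ring
  rw [f1, show 1 + (n - 1) = n by ring] at e1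
  rw [f2, show 1 + (n - 2) = n - 1 by ring, e1, f3, e3,
    show 2 - α + (n - 2) = n - α by ring] at e2
  constructor
  · rw [hcd]
    apply hg2i.mul_continuousOn
    apply Continuous.continuousOn
    exact (continuous_const.sub continuous_id).rpow_const (fun _ => Or.inr (by linarith))
  · rw [hcd]
    field_simp
    field_simp at e2
    linarith

/-- The inequality tested against `(T-t)^n`. -/
theorem tested_ineq {γ α p a b n : ℝ} {w : ℝ → ℝ}
    (hγ : 0 < γ) (hα1 : 1 < α) (hα2 : α < 2) (hp : 1 < p) (hb : 0 < b) (hn : 2 ≤ n)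
    (hw : ContDiff ℝ 1 w)
    (hAC : ∀ T > (0:ℝ), AC2On (capKernel α w) T)
    (hineq : ∀ᵐ t ∂(volume.restrict (Set.Ici (0:ℝ))),
      caputoD α w t + a * w t ≥ b * rlInt γ (fun s => |w s| ^ p) t) :
    ∃ A > 0, ∃ B > 0, ∃ C₁ > 0, ∃ C₀ > 0, ∀ T > 0,
      B * (∫ s in (0:ℝ)..T, |w s| ^ p * (T - s) ^ (n + γ))
        + C₁ * deriv w 0 * T ^ (n + 2 - α) + C₀ * w 0 * T ^ (n + 1 - α)
      ≤ a * (∫ s in (0:ℝ)..T, w s * (T - s) ^ n)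
        + A * ∫ s in (0:ℝ)..T, w s * (T - s) ^ (n - α) := by
  obtain ⟨A, hA, hcap⟩ := caputo_weight hα2 hn hw hAC
  have hwc := hw.continuous
  have hΓ : 0 < Real.Gamma γ := Real.Gamma_pos_of_pos hγ
  have hb1 : 0 < betaConst γ (n + 1) := betaConst_pos hγ (by linarith)
  have hb2 : 0 < betaConst 2 (n - α + 1) := betaConst_pos two_pos (by linarith)
  have hb3 : 0 < betaConst 1 (n - α + 1) := betaConst_pos one_pos (by linarith)
  refine ⟨A, hA, b * (1 / Real.Gamma γ * betaConst γ (n + 1)), by positivity,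
    A * betaConst 2 (n - α + 1), by positivity, A * betaConst 1 (n - α + 1), by positivity,
    fun T hT => ?_⟩
  obtain ⟨i1, e1⟩ := hcap T hT
  have hpc : Continuous fun s => |w s| ^ p :=
    hwc.abs.rpow_const (fun _ => Or.inr (by linarith))
  obtain ⟨i2, e2⟩ := fracInt_weight (σ := γ) (m := n) hγ (by linarith) hT
    (hpc.intervalIntegrable (μ := volume) 0 T)
  have hc : ∀ k : ℝ, 0 ≤ k → Continuous fun s : ℝ => (T - s) ^ k := fun k hk =>
    (continuous_const.sub continuous_id).rpow_const (fun _ => Or.inr hk)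
  have hcn := hc n (by linarith)
  have hcm := hc (n - α) (by linarith)
  have i3 : IntervalIntegrable (fun t => w t * (T - t) ^ n) volume 0 T :=
    (hwc.mul hcn).intervalIntegrable _ _
  have key : ∫ t in (0:ℝ)..T, b * (1 / Real.Gamma γ) *
        ((∫ s in (0:ℝ)..t, (t - s) ^ (γ - 1) * |w s| ^ p) * (T - t) ^ n)
      ≤ ∫ t in (0:ℝ)..T, (caputoD α w t * (T - t) ^ n + a * (w t * (T - t) ^ n)) := by
    apply intervalIntegral.integral_mono_ae_restrict hT.le (i2.const_mul _)
      (i1.add (i3.const_mul _))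
    have hae := ae_restrict_of_ae_restrict_of_subset
      (Set.Icc_subset_Ici_self : Set.Icc (0:ℝ) T ⊆ Set.Ici 0) hineq
    filter_upwards [hae, ae_restrict_mem measurableSet_Icc] with t ht htm
    have h0 : 0 ≤ (T - t) ^ n := Real.rpow_nonneg (by linarith [htm.2]) _
    have := mul_le_mul_of_nonneg_right ht h0
    simp only [rlInt] at this
    linarith
  rw [intervalIntegral.integral_const_mul, e2,
    intervalIntegral.integral_add i1 (i3.const_mul _),
    intervalIntegral.integral_const_mul, e1] at key
  have esplit : ∫ s in (0:ℝ)..T, (w s - deriv w 0 * s - w 0) * (T - s) ^ (n - α)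
      = (∫ s in (0:ℝ)..T, w s * (T - s) ^ (n - α))
        - deriv w 0 * (betaConst 2 (n - α + 1) * T ^ (n + 2 - α))
        - w 0 * (betaConst 1 (n - α + 1) * T ^ (n + 1 - α)) := by
    have b2 := integral_rpow_mul_sub_rpow (u := 2) (v := n - α + 1) hT
    have b1 := integral_rpow_mul_sub_rpow (u := 1) (v := n - α + 1) hT
    rw [show (2:ℝ) + (n - α + 1) - 1 = n + 2 - α by ring] at b2
    rw [show (1:ℝ) + (n - α + 1) - 1 = n + 1 - α by ring] at b1
    rw [← b2, ← b1, ← intervalIntegral.integral_const_mul,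
      ← intervalIntegral.integral_const_mul, ← intervalIntegral.integral_sub,
      ← intervalIntegral.integral_sub]
    · apply intervalIntegral.integral_congr
      intro s _
      norm_num
      ring
    all_goals
      apply Continuous.intervalIntegrable
      norm_num
      fun_prop
  rw [esplit, show γ + n = n + γ by ring] at key
  linarith

/-- Rescaled form of the tested inequality.  The exponent `q = (n+γ)/p` is chosen so that
`(|w| (1-s/T)^q)^p` is the integrand produced by the nonlinearity; for `n` large it lies below
the exponents `n` and `n-α` of the linear terms, which are therefore dominated by
`|w| (1-s/T)^q`. -/
theorem normalized_ineq {γ α p a b : ℝ} {w : ℝ → ℝ}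
    (hγ : 0 < γ) (hα1 : 1 < α) (hα2 : α < 2) (hp : 1 < p) (ha : 0 < a) (hb : 0 < b)
    (hw : ContDiff ℝ 1 w)
    (hAC : ∀ T > (0:ℝ), AC2On (capKernel α w) T)
    (hineq : ∀ᵐ t ∂(volume.restrict (Set.Ici (0:ℝ))),
      caputoD α w t + a * w t ≥ b * rlInt γ (fun s => |w s| ^ p) t) :
    ∃ q : ℝ, 0 < q ∧ ∃ B > 0, ∃ C₁ > 0, ∃ C₀ > 0, ∃ D > 0, ∀ T ≥ 1,
      B * T ^ γ * (∫ s in (0:ℝ)..T, (|w s| * (1 - s / T) ^ q) ^ p)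
        + C₁ * deriv w 0 * T ^ (2 - α) + C₀ * w 0 * T ^ (1 - α)
      ≤ D * ∫ s in (0:ℝ)..T, |w s| * (1 - s / T) ^ q := by
  have hp1 : 0 < p - 1 := by linarith
  have hp0 : 0 < p := by linarith
  obtain ⟨n, hn2, hn⟩ : ∃ n : ℝ, 2 ≤ n ∧ (n + γ) / p ≤ n - α := by
    refine ⟨(p * α + γ) / (p - 1) + 2, ?_, ?_⟩
    · have : 0 ≤ (p * α + γ) / (p - 1) := by positivity
      linarith
    · rw [div_le_iff₀ hp0]
      have : (p * α + γ) / (p - 1) * (p - 1) = p * α + γ := div_mul_cancel₀ _ hp1.ne'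
      nlinarith
  obtain ⟨A, hA, B, hB, C₁, hC₁, C₀, hC₀, H⟩ :=
    tested_ineq hγ hα1 hα2 hp hb hn2 hw hAC hineq
  have hwc := hw.continuous
  refine ⟨(n + γ) / p, by positivity, B, hB, C₁, hC₁, C₀, hC₀, a + A, by positivity,
    fun T hT1 => ?_⟩
  have hT : 0 < T := by linarith
  have hTn : 0 < T ^ n := by positivity
  set q := (n + γ) / p with hq
  have hq0 : 0 < q := by positivity
  have hqp : q * p = n + γ := div_mul_cancel₀ _ hp0.ne'
  have hcont : ∀ k : ℝ, 0 ≤ k → Continuous fun s : ℝ => (T - s) ^ k := fun k hk =>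
    (continuous_const.sub continuous_id).rpow_const (fun _ => Or.inr hk)
  have hcont' : Continuous fun s : ℝ => (1 - s / T) ^ q :=
    (continuous_const.sub (continuous_id.div_const T)).rpow_const (fun _ => Or.inr hq0.le)
  have hscale : ∀ k s : ℝ, s ≤ T → (T - s) ^ k = T ^ k * (1 - s / T) ^ k := by
    intro k s hs
    have h1 : 0 ≤ 1 - s / T := by
      rw [sub_nonneg, div_le_one hT]
      exact hs
    rw [← Real.mul_rpow hT.le h1]
    congr 1
    field_simp
  have hX : ∫ s in (0:ℝ)..T, |w s| ^ p * (T - s) ^ (n + γ)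
      = T ^ n * (T ^ γ * ∫ s in (0:ℝ)..T, (|w s| * (1 - s / T) ^ q) ^ p) := by
    rw [← mul_assoc, ← Real.rpow_add hT, ← intervalIntegral.integral_const_mul]
    apply intervalIntegral.integral_congr
    intro s hs
    rw [Set.uIcc_of_le hT.le] at hs
    have h1 : 0 ≤ 1 - s / T := by
      rw [sub_nonneg, div_le_one hT]
      exact hs.2
    simp only
    rw [hscale _ s hs.2, Real.mul_rpow (abs_nonneg _) (Real.rpow_nonneg h1 _),
      ← Real.rpow_mul h1, hqp]
    ring
  have hlin : ∀ k : ℝ, q ≤ k → k ≤ n → ∫ s in (0:ℝ)..T, w s * (T - s) ^ k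
      ≤ T ^ n * ∫ s in (0:ℝ)..T, |w s| * (1 - s / T) ^ q := by
    intro k hk hkn
    rw [← intervalIntegral.integral_const_mul]
    apply intervalIntegral.integral_mono_on hT.le
    · exact (hwc.mul (hcont k (by linarith))).intervalIntegrable _ _
    · exact ((hwc.abs.mul hcont').const_mul _).intervalIntegrable _ _
    · intro s hs
      have h1 : 0 ≤ 1 - s / T := by
        rw [sub_nonneg, div_le_one hT]
        exact hs.2
      have h2 : (1 - s / T) ^ k ≤ (1 - s / T) ^ q := by
        apply Real.rpow_le_rpow_of_exponent_ge' h1 _ hq0.le hk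
        have : 0 ≤ s / T := div_nonneg hs.1 hT.le
        linarith
      have h3 : T ^ k ≤ T ^ n := Real.rpow_le_rpow_of_exponent_le hT1 hkn
      have h4 : 0 ≤ (1 - s / T) ^ k := Real.rpow_nonneg h1 _
      rw [hscale k s hs.2]
      calc w s * (T ^ k * (1 - s / T) ^ k)
          ≤ |w s| * (T ^ n * (1 - s / T) ^ q) := by
            apply mul_le_mul (le_abs_self _) _ (by positivity) (abs_nonneg _)
            exact mul_le_mul h3 h2 h4 hTn.le
        _ = T ^ n * (|w s| * (1 - s / T) ^ q) := by ring
  have h := H T hT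
  have l1 := mul_le_mul_of_nonneg_left (hlin n (by linarith) le_rfl) ha.le
  have l2 := mul_le_mul_of_nonneg_left (hlin (n - α) hn (by linarith)) hA.le
  rw [hX, show n + 2 - α = n + (2 - α) by ring, show n + 1 - α = n + (1 - α) by ring,
    Real.rpow_add hT, Real.rpow_add hT n] at h
  refine le_of_mul_le_mul_left ?_ hTn
  linarith

/-- A weighted Young inequality with a crude constant. -/
theorem young_crude {p δ v : ℝ} (hp : 1 < p) (hδ : 0 < δ) (hv : 0 ≤ v) :
    v ≤ δ * v ^ p + δ ^ (-(1 / (p - 1))) := by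
  have hp1 : 0 < p - 1 := by linarith
  rcases le_total v (δ ^ (-(1 / (p - 1)))) with h | h
  · have : 0 ≤ δ * v ^ p := by positivity
    linarith
  · have hc : 0 < δ ^ (-(1 / (p - 1))) := by positivity
    have hv0 : 0 < v := lt_of_lt_of_le hc h
    have h1 := Real.rpow_le_rpow hc.le h hp1.le
    rw [← Real.rpow_mul hδ.le, show -(1 / (p - 1)) * (p - 1) = -1 by field_simp,
      Real.rpow_neg_one] at h1
    have h2 : v ^ p = v ^ (p - 1) * v := by
      rw [← Real.rpow_add_one hv0.ne', sub_add_cancel]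
    have h3 : 1 ≤ δ * v ^ (p - 1) := by
      have := mul_le_mul_of_nonneg_left h1 hδ.le
      rwa [mul_inv_cancel₀ hδ.ne'] at this
    rw [h2]
    nlinarith

theorem integral_young {p δ A T : ℝ} (hp : 1 < p) (hδ : 0 < δ) (hAT : A ≤ T) {v : ℝ → ℝ}
    (hv : Continuous v) (hv0 : ∀ s ∈ Set.Icc A T, 0 ≤ v s) :
    ∫ s in A..T, v s ≤ δ * (∫ s in A..T, v s ^ p) + (T - A) * δ ^ (-(1 / (p - 1))) := by
  have hvp : Continuous fun s => v s ^ p := hv.rpow_const (fun _ => Or.inr (by linarith))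
  have h1 : ∫ s in A..T, v s ≤ ∫ s in A..T, (δ * v s ^ p + δ ^ (-(1 / (p - 1)))) := by
    apply intervalIntegral.integral_mono_on hAT (hv.intervalIntegrable _ _)
    · exact Continuous.intervalIntegrable (by fun_prop) _ _
    · intro s hs
      exact young_crude hp hδ (hv0 s hs)
  rw [intervalIntegral.integral_add ((hvp.const_mul δ).intervalIntegrable _ _)
    (by simp), intervalIntegral.integral_const_mul, intervalIntegral.integral_const,
    smul_eq_mul] at h1
  exact h1

/-! ### The limit T → ∞ -/

/-- If `w'(0) > 0` and `p < 1 + γ/(α-1)`, the term `w'(0) T^{2-α}` outgrows the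
`O(T^{1-γ/(p-1)})` left over from Young's inequality. -/
theorem false_of_growth {γ α p B C₁ C₀ D d₁ d₀ : ℝ} {V X : ℝ → ℝ}
    (hα1 : 1 < α) (hp : 1 < p) (hB : 0 < B) (hC₁ : 0 < C₁)
    (hD : 0 < D) (hd₁ : 0 < d₁) (hcrit : p < 1 + γ / (α - 1))
    (hmain : ∀ T ≥ 1, B * T ^ γ * X T + C₁ * d₁ * T ^ (2 - α) + C₀ * d₀ * T ^ (1 - α) ≤ D * V T)
    (hyoung : ∀ T ≥ 1, ∀ δ > 0, V T ≤ δ * X T + T * δ ^ (-(1 / (p - 1)))) : False := by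
  have hp1 : 0 < p - 1 := by linarith
  have hα : 0 < α - 1 := by linarith
  have hexp : α - 1 - γ / (p - 1) < 0 := by
    have h1 : p - 1 < γ / (α - 1) := by linarith
    rw [lt_div_iff₀ hα] at h1
    rw [sub_neg, lt_div_iff₀ hp1]
    linarith
  have hle : ∀ᶠ T : ℝ in atTop, C₁ * d₁ + C₀ * d₀ * T ^ (-1 : ℝ)
      ≤ D * (B / D) ^ (-(1 / (p - 1))) * T ^ (α - 1 - γ / (p - 1)) := by
    filter_upwards [eventually_ge_atTop 1] with T hT1
    have hT : 0 < T := by linarith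
    have h1 := hmain T hT1
    have h2 := hyoung T hT1 (B / D * T ^ γ) (by positivity)
    have h3 := mul_le_mul_of_nonneg_left h2 hD.le
    have h4 : D * (B / D * T ^ γ * X T + T * (B / D * T ^ γ) ^ (-(1 / (p - 1))))
        = B * T ^ γ * X T + D * (B / D) ^ (-(1 / (p - 1))) * T ^ (1 - γ / (p - 1)) := by
      rw [Real.mul_rpow (by positivity) (by positivity), ← Real.rpow_mul hT.le,
        show 1 - γ / (p - 1) = 1 + γ * -(1 / (p - 1)) by ring, Real.rpow_add hT, Real.rpow_one]
      field_simp
    have h5 : C₁ * d₁ * T ^ (2 - α) + C₀ * d₀ * T ^ (1 - α)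
        ≤ D * (B / D) ^ (-(1 / (p - 1))) * T ^ (1 - γ / (p - 1)) := by linarith
    rw [show 1 - α = (2 - α) + (-1) by ring, Real.rpow_add hT,
      show 1 - γ / (p - 1) = (2 - α) + (α - 1 - γ / (p - 1)) by ring,
      Real.rpow_add hT (2 - α) (α - 1 - γ / (p - 1))] at h5
    refine le_of_mul_le_mul_left ?_ (Real.rpow_pos_of_pos hT (2 - α))
    linarith
  have lim1 : Tendsto (fun T : ℝ => C₁ * d₁ + C₀ * d₀ * T ^ (-1 : ℝ)) atTop
      (nhds (C₁ * d₁ + C₀ * d₀ * 0)) :=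
    ((tendsto_rpow_neg_atTop one_pos).const_mul _).const_add _
  have lim2 : Tendsto (fun T : ℝ => D * (B / D) ^ (-(1 / (p - 1))) *
      T ^ (α - 1 - γ / (p - 1))) atTop (nhds (D * (B / D) ^ (-(1 / (p - 1))) * 0)) := by
    have := tendsto_rpow_neg_atTop (y := -(α - 1 - γ / (p - 1))) (by linarith)
    rw [neg_neg] at this
    exact this.const_mul _
  have := le_of_tendsto_of_tendsto lim1 lim2 hle
  have : 0 < C₁ * d₁ := by positivity
  linarith

/-- The case `p(1-γ) ≤ 1`, where the terms from the initial data, divided by `T^γ`, are bounded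
below by `ρ(T) → 0`.  Young's inequality first gives `w ∈ L^p(0,∞)`; splitting `∫₀ᵀ` at a large
`R` and applying it on `[R,T]` only then shows `T^{-γ} ∫₀ᵀ |w| → 0`, hence `w = 0`. -/
theorem false_of_integrable {γ p q B D : ℝ} {w ρ : ℝ → ℝ}
    (hγ : 0 < γ) (hp : 1 < p) (hq : 0 < q) (hB : 0 < B) (hD : 0 < D)
    (hwc : Continuous w) (hw0 : ∃ t : ℝ, 0 ≤ t ∧ w t ≠ 0) (hcrit : p * (1 - γ) ≤ 1)
    (hρ : Tendsto ρ atTop (nhds 0))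
    (hmain : ∀ T ≥ 1, B * (∫ s in (0:ℝ)..T, (|w s| * (1 - s / T) ^ q) ^ p) + ρ T
      ≤ D * (T ^ (-γ) * ∫ s in (0:ℝ)..T, |w s| * (1 - s / T) ^ q)) : False := by
  have hp1 : 0 < p - 1 := by linarith
  have hp0 : 0 < p := by linarith
  have hq2 : (0:ℝ) < (1 / 2) ^ (q * p) := by positivity
  have hpc : Continuous fun s => |w s| ^ p := hwc.abs.rpow_const (fun _ => Or.inr hp0.le)
  have hvc : ∀ T : ℝ, Continuous fun s => |w s| * (1 - s / T) ^ q := fun T =>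
    hwc.abs.mul ((continuous_const.sub (continuous_id.div_const T)).rpow_const
      (fun _ => Or.inr hq.le))
  have hvpc : ∀ T : ℝ, Continuous fun s => (|w s| * (1 - s / T) ^ q) ^ p := fun T =>
    (hvc T).rpow_const (fun _ => Or.inr hp0.le)
  have h1s : ∀ T ≥ (1:ℝ), ∀ s ≤ T, 0 ≤ 1 - s / T := by
    intro T hT s hs
    rw [sub_nonneg, div_le_one (by linarith)]
    exact hs
  have hv0 : ∀ T ≥ (1:ℝ), ∀ s ≤ T, 0 ≤ |w s| * (1 - s / T) ^ q := fun T hT s hs =>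
    mul_nonneg (abs_nonneg _) (Real.rpow_nonneg (h1s T hT s hs) _)
  have hvle : ∀ T ≥ (1:ℝ), ∀ s, 0 ≤ s → s ≤ T → |w s| * (1 - s / T) ^ q ≤ |w s| := by
    intro T hT s hs0 hs
    apply mul_le_of_le_one_right (abs_nonneg _)
    apply Real.rpow_le_one (h1s T hT s hs) _ hq.le
    have : 0 ≤ s / T := div_nonneg hs0 (by linarith)
    linarith
  -- `p (1 - γ) ≤ 1` says that `T^{-γ} · T · (T^γ)^{-1/(p-1)}` is a nonpositive power of `T`.
  have hpow : ∀ T ≥ (1:ℝ), ∀ η > 0,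
      T ^ (-γ) * (T * (η * T ^ γ) ^ (-(1 / (p - 1)))) ≤ η ^ (-(1 / (p - 1))) := by
    intro T hT1 η hη
    have hT : 0 < T := by linarith
    have hexp : -γ + (1 + γ * -(1 / (p - 1))) ≤ 0 := by
      have : -γ + (1 + γ * -(1 / (p - 1))) = (p * (1 - γ) - 1) / (p - 1) := by
        field_simp
        ring
      rw [this]
      exact div_nonpos_of_nonpos_of_nonneg (by linarith) hp1.le
    have h1 : T ^ (-γ) * (T * (η * T ^ γ) ^ (-(1 / (p - 1))))
        = η ^ (-(1 / (p - 1))) * T ^ (-γ + (1 + γ * -(1 / (p - 1)))) := by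
      rw [Real.mul_rpow hη.le (by positivity), ← Real.rpow_mul hT.le, Real.rpow_add hT,
        Real.rpow_add hT 1, Real.rpow_one]
      ring
    rw [h1]
    apply mul_le_of_le_one_right (by positivity)
    exact Real.rpow_le_one_of_one_le_of_nonpos hT1 hexp
  have hTγ : ∀ T ≥ (1:ℝ), T ^ (-γ) * T ^ γ = 1 := by
    intro T hT
    rw [← Real.rpow_add (by linarith), neg_add_cancel, Real.rpow_zero]
  -- On `[0, T/2]` the weight is at least `2^{-q}`.
  have hYX : ∀ R T : ℝ, 0 ≤ R → 1 ≤ T → 2 * R ≤ T → (1 / 2) ^ (q * p) * (∫ s in (0:ℝ)..R, |w s| ^ p)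
      ≤ ∫ s in (0:ℝ)..T, (|w s| * (1 - s / T) ^ q) ^ p := by
    intro R T hR hT1 hRT
    have hT : 0 < T := by linarith
    have h1 : ∫ s in (0:ℝ)..R, (|w s| * (1 - s / T) ^ q) ^ p
        ≤ ∫ s in (0:ℝ)..T, (|w s| * (1 - s / T) ^ q) ^ p := by
      apply intervalIntegral.integral_mono_interval le_rfl hR (by linarith)
      · filter_upwards [ae_restrict_mem measurableSet_Ioc] with s hs
        exact Real.rpow_nonneg (hv0 T hT1 s hs.2) _
      · exact (hvpc T).intervalIntegrable _ _
    refine le_trans ?_ h1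
    rw [← intervalIntegral.integral_const_mul]
    apply intervalIntegral.integral_mono_on hR ((hpc.const_mul _).intervalIntegrable _ _)
      ((hvpc T).intervalIntegrable _ _)
    intro s hs
    have h2 : 1 / 2 ≤ 1 - s / T := by
      have : s / T ≤ 1 / 2 := by
        rw [div_le_iff₀ hT]
        linarith [hs.2]
      linarith
    have h3 : 0 ≤ 1 - s / T := by linarith
    rw [Real.mul_rpow (abs_nonneg _) (Real.rpow_nonneg h3 _), ← Real.rpow_mul h3, mul_comm]
    apply mul_le_mul_of_nonneg_left _ (by positivity)
    exact Real.rpow_le_rpow (by norm_num) h2 (by positivity)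
  -- Integrability of `|w|^p`.
  set Y : ℝ → ℝ := fun R => ∫ s in (0:ℝ)..R, |w s| ^ p with hY
  have hYmono : ∀ R T, 0 ≤ R → R ≤ T → Y R ≤ Y T := by
    intro R T hR hRT
    apply intervalIntegral.integral_mono_interval le_rfl hR hRT
    · exact Eventually.of_forall fun s => by positivity
    · exact hpc.intervalIntegrable _ _
  obtain ⟨S, hS⟩ : ∃ S, ∀ R ≥ 0, Y R ≤ S := by
    have hev : ∀ᶠ T in atTop, -1 < ρ T := hρ.eventually (lt_mem_nhds (by norm_num))
    obtain ⟨T₀, hT₀⟩ := eventually_atTop.1 hev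
    refine ⟨(D * (B / (2 * D)) ^ (-(1 / (p - 1))) + 1) / (B / 2) / (1 / 2) ^ (q * p),
      fun R hR => ?_⟩
    set T := max (max 1 T₀) (2 * R) with hTdef
    have hT1 : 1 ≤ T := (le_max_left _ _).trans (le_max_left _ _)
    have hTT₀ : T₀ ≤ T := (le_max_right _ _).trans (le_max_left _ _)
    have hT2R : 2 * R ≤ T := le_max_right _ _
    have hT : 0 < T := by linarith
    rw [le_div_iff₀ hq2, le_div_iff₀ (by positivity)]
    have h1 := hYX R T hR hT1 hT2R
    have h2 := hmain T hT1
    have h3 := integral_young (δ := B / (2 * D) * T ^ γ) hp (by positivity) hT.le (hvc T)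
      (fun s hs => hv0 T hT1 s hs.2)
    rw [sub_zero] at h3
    have h4 := hpow T hT1 (B / (2 * D)) (by positivity)
    have h5 := mul_le_mul_of_nonneg_left h3 (Real.rpow_nonneg hT.le (-γ))
    have h6 := hT₀ T hTT₀
    set X := ∫ s in (0:ℝ)..T, (|w s| * (1 - s / T) ^ q) ^ p with hX
    have h7 : T ^ (-γ) * (B / (2 * D) * T ^ γ * X
        + T * (B / (2 * D) * T ^ γ) ^ (-(1 / (p - 1))))
        = B / (2 * D) * X * (T ^ (-γ) * T ^ γ)
          + T ^ (-γ) * (T * (B / (2 * D) * T ^ γ) ^ (-(1 / (p - 1)))) := by ring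
    rw [h7, hTγ T hT1, mul_one] at h5
    have h8 := mul_le_mul_of_nonneg_left (h5.trans (add_le_add_right h4 _)) hD.le
    have h9 : D * (B / (2 * D) * X + (B / (2 * D)) ^ (-(1 / (p - 1))))
        = B / 2 * X + D * (B / (2 * D)) ^ (-(1 / (p - 1))) := by field_simp
    have h10 := mul_le_mul_of_nonneg_left h1 (show 0 ≤ B / 2 by positivity)
    have h11 : Y R * (1 / 2) ^ (q * p) * (B / 2) = B / 2 * ((1 / 2) ^ (q * p) * Y R) := by ring
    rw [h11]
    linarith
  have hYpos : ∃ L ≥ 0, 0 < Y L := by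
    obtain ⟨t, ht, hwt⟩ := hw0
    refine ⟨t + 1, by linarith, ?_⟩
    apply intervalIntegral.integral_pos (by linarith) hpc.continuousOn
      (fun s _ => by positivity)
    exact ⟨t, ⟨ht, by linarith⟩, Real.rpow_pos_of_pos (abs_pos.2 hwt) _⟩
  obtain ⟨L, hL, hYL⟩ := hYpos
  -- The supremum of `Y` over `[0,∞)`; tails of `∫ |w|^p` are measured against it.
  obtain ⟨S', hS', hS'lt⟩ : ∃ S', (∀ R ≥ 0, Y R ≤ S') ∧ ∀ ε > 0, ∃ R ≥ 0, S' - ε < Y R := by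
    have hbdd : BddAbove (Y '' Set.Ici 0) := ⟨S, by rintro _ ⟨R, hR, rfl⟩; exact hS R hR⟩
    refine ⟨sSup (Y '' Set.Ici 0), fun R hR => le_csSup hbdd ⟨R, hR, rfl⟩, fun ε hε => ?_⟩
    obtain ⟨_, ⟨R, hR, rfl⟩, h⟩ := exists_lt_of_lt_csSup
      (⟨_, ⟨0, Set.self_mem_Ici, rfl⟩⟩ : (Y '' Set.Ici 0).Nonempty)
      (show sSup (Y '' Set.Ici 0) - ε < sSup (Y '' Set.Ici 0) by linarith)
    exact ⟨R, hR, h⟩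
  set c := B * ((1 / 2) ^ (q * p) * Y L) with hc
  have hcpos : 0 < c := by positivity
  have hstep : ∀ η > 0, ∀ R ≥ 0, c ≤ D * (η * (S' - Y R) + η ^ (-(1 / (p - 1)))) := by
    intro η hη R hR
    have hev : ∀ᶠ T : ℝ in atTop, c + ρ T ≤
        D * (T ^ (-γ) * (∫ s in (0:ℝ)..R, |w s|) + (η * (S' - Y R) + η ^ (-(1 / (p - 1))))) := by
      filter_upwards [eventually_ge_atTop 1, eventually_ge_atTop (2 * L),
        eventually_ge_atTop R] with T hT1 hTL hTR
      have hT : 0 < T := by linarith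
      have h1 := mul_le_mul_of_nonneg_left (hYX L T hL hT1 hTL) hB.le
      have h2 := hmain T hT1
      have hlow : ∫ s in (0:ℝ)..T, |w s| * (1 - s / T) ^ q ≤ ∫ s in (0:ℝ)..T, |w s| :=
        intervalIntegral.integral_mono_on hT.le ((hvc T).intervalIntegrable _ _)
          (hwc.abs.intervalIntegrable _ _) (fun s hs => hvle T hT1 s hs.1 hs.2)
      have hsplit : ∫ s in (0:ℝ)..T, |w s| = (∫ s in (0:ℝ)..R, |w s|) + ∫ s in R..T, |w s| :=
        (intervalIntegral.integral_add_adjacent_intervals (hwc.abs.intervalIntegrable _ _)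
          (hwc.abs.intervalIntegrable _ _)).symm
      have hsplitY : Y T = Y R + ∫ s in R..T, |w s| ^ p :=
        (intervalIntegral.integral_add_adjacent_intervals (hpc.intervalIntegrable _ _)
          (hpc.intervalIntegrable _ _)).symm
      have h3 := integral_young (δ := η * T ^ γ) hp (by positivity) hTR hwc.abs
        (fun s _ => abs_nonneg _)
      have htail : ∫ s in R..T, |w s| ^ p ≤ S' - Y R := by linarith [hS' T hT.le]
      have h4 : ∫ s in R..T, |w s| ≤ η * T ^ γ * (S' - Y R)
          + T * (η * T ^ γ) ^ (-(1 / (p - 1))) := by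
        refine h3.trans (add_le_add (mul_le_mul_of_nonneg_left htail (by positivity)) ?_)
        exact mul_le_mul_of_nonneg_right (by linarith) (by positivity)
      have h5 := mul_le_mul_of_nonneg_left h4 (Real.rpow_nonneg hT.le (-γ))
      have h6 := hpow T hT1 η hη
      have h7 : T ^ (-γ) * (η * T ^ γ * (S' - Y R) + T * (η * T ^ γ) ^ (-(1 / (p - 1))))
          = η * (S' - Y R) * (T ^ (-γ) * T ^ γ)
            + T ^ (-γ) * (T * (η * T ^ γ) ^ (-(1 / (p - 1)))) := by ring
      rw [h7, hTγ T hT1, mul_one] at h5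
      have h8 := mul_le_mul_of_nonneg_left hlow (Real.rpow_nonneg hT.le (-γ))
      rw [hsplit, mul_add] at h8
      have h9 : T ^ (-γ) * (∫ s in (0:ℝ)..T, |w s| * (1 - s / T) ^ q)
          ≤ T ^ (-γ) * (∫ s in (0:ℝ)..R, |w s|)
            + (η * (S' - Y R) + η ^ (-(1 / (p - 1)))) := by linarith
      have h10 := mul_le_mul_of_nonneg_left h9 hD.le
      linarith
    have lim1 : Tendsto (fun T => c + ρ T) atTop (nhds (c + 0)) := hρ.const_add c
    have lim2 := (((tendsto_rpow_neg_atTop hγ).mul_const (∫ s in (0:ℝ)..R, |w s|)).add_const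
      (η * (S' - Y R) + η ^ (-(1 / (p - 1))))).const_mul D
    have := le_of_tendsto_of_tendsto lim1 lim2 hev
    simpa using this
  have hη : ∀ η > 0, c ≤ D * η ^ (-(1 / (p - 1))) := by
    intro η hη
    refine le_of_forall_pos_le_add fun ε hε => ?_
    obtain ⟨R, hR, hR2⟩ := hS'lt (ε / (D * η)) (by positivity)
    have h1 := hstep η hη R hR
    have h2 : D * η * (S' - Y R) ≤ ε := by
      have : S' - Y R ≤ ε / (D * η) := by linarith
      rw [le_div_iff₀ (by positivity)] at this
      linarith
    linarith
  have lim := (tendsto_rpow_neg_atTop (y := 1 / (p - 1)) (by positivity)).const_mul D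
  rw [mul_zero] at lim
  have := ge_of_tendsto lim ((eventually_gt_atTop 0).mono hη)
  linarith

/-- Corollary 2.5 (vi): under conditions (a)–(d), no nontrivial global solution of the inequality ₀D_t^α w + a w ≥ b ₀I_t^γ |w|^p exists on [0,∞). -/
theorem cor_blowup_vi
    (γ α p a b : ℝ) (w : ℝ → ℝ)
    (hγ : 0 < γ) (hα1 : 1 < α) (hα2 : α < 2) (hp : 1 < p) (ha : 0 < a) (hb : 0 < b)
    (hw : ContDiff ℝ 1 w)
    (hw0 : ∃ t : ℝ, 0 ≤ t ∧ w t ≠ 0)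
    (hAC : ∀ T > (0:ℝ), AC2On (capKernel α w) T)
    (hineq : ∀ᵐ t ∂(volume.restrict (Set.Ici (0:ℝ))),
      caputoD α w t + a * w t ≥ b * rlInt γ (fun s => |w s| ^ p) t)
    (hcond :
      (2 < α + γ ∧ p * (1 - γ) ≤ 1) ∨
      (α + γ ≤ 2 ∧ deriv w 0 = 0 ∧ p * (1 - γ) ≤ 1) ∨
      (α + γ = 2 ∧ 0 < deriv w 0 ∧ p * (1 - γ) ≤ 1) ∨
      (α + γ < 2 ∧ 0 < deriv w 0 ∧ p < 1 + γ / (α - 1))) :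
    False := by
  obtain ⟨q, hq, B, hB, C₁, hC₁, C₀, hC₀, D, hD, H⟩ :=
    normalized_ineq hγ hα1 hα2 hp ha hb hw hAC hineq
  have hwc := hw.continuous
  have hdiv : ∀ T ≥ (1:ℝ), B * (∫ s in (0:ℝ)..T, (|w s| * (1 - s / T) ^ q) ^ p)
      + (C₁ * deriv w 0 * T ^ (2 - α - γ) + C₀ * w 0 * T ^ (1 - α - γ))
      ≤ D * (T ^ (-γ) * ∫ s in (0:ℝ)..T, |w s| * (1 - s / T) ^ q) := by
    intro T hT1
    have hT : 0 < T := by linarith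
    refine le_of_mul_le_mul_left ?_ (Real.rpow_pos_of_pos hT γ)
    have h1 : T ^ γ * T ^ (-γ) = 1 := by
      rw [← Real.rpow_add hT, add_neg_cancel, Real.rpow_zero]
    have h2 : T ^ γ * T ^ (2 - α - γ) = T ^ (2 - α) := by
      rw [← Real.rpow_add hT]
      congr 1
      ring
    have h3 : T ^ γ * T ^ (1 - α - γ) = T ^ (1 - α) := by
      rw [← Real.rpow_add hT]
      congr 1
      ring
    have h := H T hT1
    rw [← h2, ← h3] at h
    set V := ∫ s in (0:ℝ)..T, |w s| * (1 - s / T) ^ q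
    have h4 : T ^ γ * (D * (T ^ (-γ) * V)) = D * V := by
      rw [show T ^ γ * (D * (T ^ (-γ) * V)) = (T ^ γ * T ^ (-γ)) * (D * V) by ring, h1, one_mul]
    rw [h4]
    linarith
  have lim0 : Tendsto (fun T : ℝ => C₀ * w 0 * T ^ (1 - α - γ)) atTop (nhds 0) := by
    have := (tendsto_rpow_neg_atTop (y := -(1 - α - γ)) (by linarith)).const_mul (C₀ * w 0)
    simpa only [neg_neg, mul_zero] using this
  rcases hcond with ⟨hαγ, hcrit⟩ | ⟨-, hd, hcrit⟩ | ⟨-, hd, hcrit⟩ | ⟨-, hd, hcrit⟩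
  · refine false_of_integrable hγ hp hq hB hD hwc hw0 hcrit
      (ρ := fun T => C₁ * deriv w 0 * T ^ (2 - α - γ) + C₀ * w 0 * T ^ (1 - α - γ)) ?_ hdiv
    have := (tendsto_rpow_neg_atTop (y := -(2 - α - γ)) (by linarith)).const_mul
      (C₁ * deriv w 0)
    simpa only [neg_neg, mul_zero, add_zero] using this.add lim0
  · refine false_of_integrable hγ hp hq hB hD hwc hw0 hcrit lim0 fun T hT1 => ?_
    have := hdiv T hT1
    rwa [hd, mul_zero, zero_mul, zero_add] at this
  · refine false_of_integrable hγ hp hq hB hD hwc hw0 hcrit lim0 fun T hT1 => ?_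
    have h1 := hdiv T hT1
    have h2 : 0 ≤ C₁ * deriv w 0 * T ^ (2 - α - γ) := by positivity
    linarith
  · refine false_of_growth (V := fun T => ∫ s in (0:ℝ)..T, |w s| * (1 - s / T) ^ q)
      (X := fun T => ∫ s in (0:ℝ)..T, (|w s| * (1 - s / T) ^ q) ^ p)
      hα1 hp hB hC₁ hD hd hcrit H ?_
    intro T hT1 δ hδ
    have hT : 0 < T := by linarith
    have h := integral_young hp hδ hT.le
      (v := fun s => |w s| * (1 - s / T) ^ q)
      (hwc.abs.mul ((continuous_const.sub (continuous_id.div_const T)).rpow_const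
        (fun _ => Or.inr hq.le)))
      (fun s hs => mul_nonneg (abs_nonneg _)
        (Real.rpow_nonneg (sub_nonneg.2 ((div_le_one hT).2 hs.2)) _))
    rwa [sub_zero] at h
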